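/- A set function f : 2^N → ℝ ∪ {-∞} with dom f ≠ ∅ satisfies the strong no complementarities property (SNC) if and only if it satisfies the gross substitutes property (GS). -/

import Mathlib

open Finset

/-- Demand correspondence: the maximizers of `f(Z) - p(Z)` over all `Z ⊆ N`. -/
def Demand {N : Type*} (f : Finset N → WithBot ℝ) (p : N → ℝ) : Set (Finset N) :=
  {X | ∀ Z : Finset N, f Z + ((-(∑ i ∈ Z, p i) : ℝ) : WithBot ℝ)
        ≤ f X + ((-(∑ i ∈ X, p i) : ℝ) : WithBot ℝ)}

/-- (SNC): strong no complementarities property. -/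
def SNC {N : Type*} [DecidableEq N] (f : Finset N → WithBot ℝ) : Prop :=
  ∀ X Y : Finset N, ∀ I ⊆ X \ Y, ∃ J ⊆ Y \ X,
    f X + f Y ≤ f ((X \ I) ∪ J) + f ((Y \ J) ∪ I)

/-- (GS): gross substitutes property. -/
def GS {N : Type*} (f : Finset N → WithBot ℝ) : Prop :=
  ∀ p q : N → ℝ, (∀ i, p i ≤ q i) → ∀ X ∈ Demand f p, ∃ Y ∈ Demand f q,
    ∀ i ∈ X, p i = q i → i ∈ Y

/-!
(SNC) ⇒ (GS): exchange the goods of `X` whose price is unchanged against a bundle demanded at the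
higher prices.

(GS) ⇒ (SNC): for real-valued `f`, gross substitutes make the indirect utility `V` submodular. Let
two bidders, both with valuation `f`, bid for the goods of `Y \ X` in an ascending auction while
prohibitive prices on the other goods force the first to hold `X \ I` and the second
`(X ∩ Y) ∪ I`. The auction ends with prices `p` and `q`, almost equal on `Y \ X`, at which
`(X \ I) ∪ J` and `(Y \ J) ∪ I` are demanded for some `J ⊆ Y \ X`. Evaluating
`V (p ⊓ q) + V (p ⊔ q) ≤ V p + V q`, with `X` and `Y` as candidates on the left, gives the exchange
inequality up to a vanishing error.

Values `-∞` are removed by letting the bidder convert one bundle into another at a large cost `M`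
per good. The demand of this real-valued extension at `p` is governed by the demand of `f` at the
prices `p` truncated to `[-M, M]`, so the extension inherits (GS); and for large `M` an exchange
inequality of the extension between bundles of `dom f` never uses a conversion.
-/

section Demand

variable {N : Type*}

theorem mem_demand_iff {f : Finset N → WithBot ℝ} (hdom : ∃ X, f X ≠ ⊥) {p : N → ℝ}
    {X : Finset N} :
    X ∈ Demand f p ↔ ∃ x : ℝ, f X = x ∧
      ∀ (Z : Finset N) (z : ℝ), f Z = z → z - ∑ i ∈ Z, p i ≤ x - ∑ i ∈ X, p i := by
  constructor
  · intro hX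
    have hX_ne : f X ≠ ⊥ := by
      obtain ⟨Z, hZ⟩ := hdom
      intro hbot
      have h := hX Z
      rw [hbot, WithBot.bot_add, le_bot_iff, WithBot.add_eq_bot] at h
      exact h.elim hZ WithBot.coe_ne_bot
    obtain ⟨x, hx⟩ := WithBot.ne_bot_iff_exists.1 hX_ne
    refine ⟨x, hx.symm, fun Z z hz => ?_⟩
    have h := hX Z
    rw [hz, ← hx] at h
    simpa only [sub_eq_add_neg] using (by exact_mod_cast h :
      z + -∑ i ∈ Z, p i ≤ x + -∑ i ∈ X, p i)
  · rintro ⟨x, hx, hmax⟩ Z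
    rw [hx]
    cases hz : f Z with
    | bot => simp only [WithBot.bot_add, bot_le]
    | coe z =>
      simp only [← WithBot.coe_add, WithBot.coe_le_coe, ← sub_eq_add_neg]
      exact hmax Z z hz

theorem demand_nonempty [Finite N] (f : Finset N → WithBot ℝ) (p : N → ℝ) :
    (Demand f p).Nonempty :=
  Finite.exists_max fun Z => f Z + ((-(∑ i ∈ Z, p i) : ℝ) : WithBot ℝ)

end Demand

section SNCToGS

variable {N : Type*} [DecidableEq N]

theorem exists_coe_of_coe_le_add {c : ℝ} {u v : WithBot ℝ} (h : (c : WithBot ℝ) ≤ u + v) :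
    ∃ a b : ℝ, u = a ∧ v = b ∧ c ≤ a + b := by
  cases u with
  | bot => simp at h
  | coe a =>
    cases v with
    | bot => simp at h
    | coe b => exact ⟨a, b, rfl, rfl, by exact_mod_cast h⟩

theorem sum_exchange_le {p q : N → ℝ} (hpq : ∀ i, p i ≤ q i) {X Y I J : Finset N}
    (hI : I ⊆ X \ Y) (hJ : J ⊆ Y \ X) (hIpq : ∀ i ∈ I, p i = q i) :
    ∑ i ∈ (X \ I) ∪ J, p i + ∑ i ∈ (Y \ J) ∪ I, q i ≤ ∑ i ∈ X, p i + ∑ i ∈ Y, q i := by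
  rw [sum_union (disjoint_left.2 fun i => by grind),
    sum_union (disjoint_left.2 fun i => by grind),
    ← sum_sdiff (hI.trans sdiff_subset), ← sum_sdiff (hJ.trans sdiff_subset), sum_congr rfl hIpq]
  linarith [sum_le_sum fun i (_ : i ∈ J) => hpq i]

theorem SNC.gs [Finite N] {f : Finset N → WithBot ℝ} (hdom : ∃ X, f X ≠ ⊥) (h : SNC f) :
    GS f := by
  intro p q hpq X hX
  obtain ⟨Y, hY⟩ := demand_nonempty f q
  set I := (X \ Y).filter fun i => p i = q i
  have hI : I ⊆ X \ Y := filter_subset _ _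
  obtain ⟨J, hJ, hle⟩ := h X Y I hI
  obtain ⟨x, hx, hXmax⟩ := (mem_demand_iff hdom).1 hX
  obtain ⟨y, hy, hYmax⟩ := (mem_demand_iff hdom).1 hY
  rw [hx, hy, ← WithBot.coe_add] at hle
  obtain ⟨a, b, ha, hb, hxy⟩ := exists_coe_of_coe_le_add hle
  refine ⟨(Y \ J) ∪ I, (mem_demand_iff hdom).2 ⟨b, hb, fun Z z hz => ?_⟩, by grind⟩
  linarith [hXmax _ a ha, hYmax Z z hz,
    sum_exchange_le hpq hI hJ fun i hi => (mem_filter.1 hi).2]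

end SNCToGS

section Surplus

variable {N : Type*}

/-- The surplus of a bundle `Z` at prices `p` under a real-valued valuation `g`. -/
def surplus (g : Finset N → ℝ) (p : N → ℝ) (Z : Finset N) : ℝ :=
  g Z - ∑ i ∈ Z, p i

/-- The indirect utility: the largest surplus attainable at prices `p`. For infinite `N` the
supremum may have its junk value. -/
noncomputable def indirectUtility (g : Finset N → ℝ) (p : N → ℝ) : ℝ :=
  ⨆ Z, surplus g p Z

variable {g : Finset N → ℝ} {p : N → ℝ}

theorem mem_demand_coe {X : Finset N} :
    X ∈ Demand (fun S => (g S : WithBot ℝ)) p ↔ ∀ Z, surplus g p Z ≤ surplus g p X := by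
  simp only [Demand, surplus, Set.mem_ofPred_eq, sub_eq_add_neg]
  norm_cast

theorem surplus_le_indirectUtility [Finite N] (g : Finset N → ℝ) (p : N → ℝ) (Z : Finset N) :
    surplus g p Z ≤ indirectUtility g p :=
  le_ciSup (Set.finite_range _).bddAbove Z

theorem mem_demand_coe_iff_indirectUtility_eq [Finite N] {X : Finset N} :
    X ∈ Demand (fun S => (g S : WithBot ℝ)) p ↔ indirectUtility g p = surplus g p X := by
  rw [mem_demand_coe]
  exact ⟨fun h => le_antisymm (ciSup_le h) (surplus_le_indirectUtility g p X),
    fun h Z => h ▸ surplus_le_indirectUtility g p Z⟩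

variable {R : ℝ} {Z : Finset N} {i : N}

theorem price_le_of_mem_demand (hR : ∀ S T, g S - g T ≤ R)
    (hZ : Z ∈ Demand (fun S => (g S : WithBot ℝ)) p) (hi : i ∈ Z) : p i ≤ R := by
  classical
  have hmax := mem_demand_coe.1 hZ (Z.erase i)
  unfold surplus at hmax
  linarith [sum_erase_add Z p hi, hR Z (Z.erase i)]

theorem neg_le_price_of_notMem_demand (hR : ∀ S T, g S - g T ≤ R)
    (hZ : Z ∈ Demand (fun S => (g S : WithBot ℝ)) p) (hi : i ∉ Z) : -R ≤ p i := by
  classical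
  have hmax := mem_demand_coe.1 hZ (insert i Z)
  unfold surplus at hmax
  linarith [sum_insert (f := p) hi, hR Z (insert i Z)]

theorem exists_forall_sub_le [Finite N] (g : Finset N → ℝ) : ∃ R, ∀ S T, g S - g T ≤ R := by
  obtain ⟨R, hR⟩ :=
    (Set.finite_range fun ST : Finset N × Finset N => g ST.1 - g ST.2).bddAbove
  exact ⟨R, fun S T => hR ⟨(S, T), rfl⟩⟩

theorem surplus_update [DecidableEq N] (g : Finset N → ℝ) (p : N → ℝ) (i : N) (t : ℝ)
    (Z : Finset N) :
    surplus g (Function.update p i t) Z = surplus g p Z - if i ∈ Z then t - p i else 0 := by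
  unfold surplus
  split_ifs with hi
  · rw [sum_update_of_mem hi, sum_eq_add_sum_sdiff_singleton_of_mem hi p]
    ring
  · rw [sum_update_of_notMem hi, sub_zero]

end Surplus

section Submodularity

variable {N : Type*} [Finite N] {g : Finset N → ℝ} {p q : N → ℝ} {i : N}

theorem mem_demand_update_add_indirectUtility_sub [DecidableEq N] (t : ℝ) {Z : Finset N}
    (hZ : Z ∈ Demand (fun S => (g S : WithBot ℝ)) p) (hiZ : i ∈ Z) :
    Z ∈ Demand (fun S => (g S : WithBot ℝ)) (Function.update p i
      (p i + (indirectUtility g p - indirectUtility g (Function.update p i t)))) := by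
  rw [mem_demand_coe]
  rw [mem_demand_coe_iff_indirectUtility_eq] at hZ
  intro T
  by_cases hiT : i ∈ T
  · simpa only [surplus_update, hiT, hiZ, if_true, sub_le_sub_iff_right, hZ]
      using surplus_le_indirectUtility g p T
  · have h := surplus_le_indirectUtility g (Function.update p i t) T
    simp only [surplus_update, hiT, hiZ, if_true, if_false] at h ⊢
    linarith

theorem GS.indirectUtility_add_update_le [DecidableEq N] (hg : GS fun S => (g S : WithBot ℝ))
    (hpq : ∀ j, p j ≤ q j) (hi : p i = q i) {t : ℝ} (ht : p i ≤ t) :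
    indirectUtility g p + indirectUtility g (Function.update q i t) ≤
      indirectUtility g (Function.update p i t) + indirectUtility g q := by
  obtain ⟨Z, hZ⟩ := demand_nonempty (fun S => (g S : WithBot ℝ)) p
  obtain ⟨W, hW⟩ := demand_nonempty (fun S => (g S : WithBot ℝ)) (Function.update q i t)
  have hVp := mem_demand_coe_iff_indirectUtility_eq.1 hZ
  have hVq := mem_demand_coe_iff_indirectUtility_eq.1 hW
  have hZ_le := surplus_le_indirectUtility g (Function.update p i t) Z
  have hW_le := surplus_le_indirectUtility g q W
  rw [surplus_update] at hVq hZ_le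
  by_cases hiW : i ∈ W
  · rw [if_pos hiW] at hVq
    split_ifs at hZ_le <;> linarith
  rw [if_neg hiW] at hVq
  by_cases hiZ : i ∈ Z
  · -- Raised by the drop `s` in indirect utility, the price of `i` still lets `Z` be demanded at
    -- `p`; gross substitutes then give a bundle containing `i` that is demanded at the higher `q`.
    set s := indirectUtility g p - indirectUtility g (Function.update p i t)
    obtain ⟨Y, hY, hkeep⟩ := hg (Function.update p i (p i + s)) (Function.update q i (p i + s))
      (update_le_update_iff.2 ⟨le_rfl, fun j _ => hpq j⟩) Z
      (mem_demand_update_add_indirectUtility_sub t hZ hiZ)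
    have hiY : i ∈ Y := hkeep i hiZ (by simp only [Function.update_self])
    have hYW := mem_demand_coe.1 hY W
    have hY_le := surplus_le_indirectUtility g q Y
    rw [surplus_update, surplus_update, if_neg hiW, if_pos hiY] at hYW
    linarith
  · rw [if_neg hiZ] at hZ_le
    linarith

theorem GS.indirectUtility_add_piecewise_le [DecidableEq N]
    (hg : GS fun S => (g S : WithBot ℝ)) {r : N → ℝ}
    (hpq : ∀ i, p i ≤ q i) {S : Finset N} (hS : ∀ i ∈ S, p i = q i) (hr : ∀ i ∈ S, p i ≤ r i) :
    indirectUtility g p + indirectUtility g (S.piecewise r q) ≤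
      indirectUtility g (S.piecewise r p) + indirectUtility g q := by
  induction S using Finset.induction_on with
  | empty => simp only [piecewise_empty, le_refl]
  | insert j S hj ih =>
    have hS_le := ih (fun i hi => hS i (mem_insert_of_mem hi))
      fun i hi => hr i (mem_insert_of_mem hi)
    have hj_le := hg.indirectUtility_add_update_le (p := S.piecewise r p) (q := S.piecewise r q)
      (i := j) (t := r j) (piecewise_le_piecewise _ le_rfl hpq)
      (by simpa only [piecewise_eq_of_notMem _ _ _ hj] using hS j (mem_insert_self j S))
      (by simpa only [piecewise_eq_of_notMem _ _ _ hj] using hr j (mem_insert_self j S))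
    rw [piecewise_insert, piecewise_insert]
    linarith

theorem GS.indirectUtility_inf_add_sup_le (hg : GS fun S => (g S : WithBot ℝ))
    (p q : N → ℝ) :
    indirectUtility g (p ⊓ q) + indirectUtility g (p ⊔ q) ≤
      indirectUtility g p + indirectUtility g q := by
  classical
  have := Fintype.ofFinite N
  let S : Finset N := {i | q i ≤ p i}
  have hS {i : N} : i ∈ S ↔ q i ≤ p i := mem_filter_univ i
  have hp : S.piecewise p (p ⊓ q) = p := by
    ext i
    by_cases hi : q i ≤ p i
    · simp [hS.2 hi]
    · simp [hS.not.2 hi, (not_le.1 hi).le]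
  have hsup : S.piecewise p q = p ⊔ q := by
    ext i
    by_cases hi : q i ≤ p i
    · simp [hS.2 hi, hi]
    · simp [hS.not.2 hi, (not_le.1 hi).le]
  have hle := hg.indirectUtility_add_piecewise_le (p := p ⊓ q) (q := q) (r := p) (S := S)
    (fun i => inf_le_right) (fun i hi => inf_eq_right.2 (hS.1 hi)) fun i _ => inf_le_left
  rwa [hp, hsup] at hle

end Submodularity

section Auction

variable {N : Type*} {g h : Finset N → ℝ} {K : Finset N} {ε : ℝ} {p q : N → ℝ}

/-- A state of the ascending auction of the goods `K` between a bidder with valuation `g` facing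
prices `p` and a bidder with valuation `h` facing prices `q`. They hold `A` and `B`, and each good
is quoted `ε` dearer to the bidder who does not hold it. Prices off `K` are arbitrary. -/
structure AuctionState [DecidableEq N] (g h : Finset N → ℝ) (K : Finset N) (ε : ℝ) (p q : N → ℝ)
    (A B : Finset N) : Prop where
  union_eq : A ∪ B = K
  disjoint : Disjoint A B
  price_right : ∀ i ∈ A, q i = p i + ε
  price_left : ∀ i ∈ B, p i = q i + ε
  left_satisfied : ∃ Z ∈ Demand (fun S => (g S : WithBot ℝ)) p, A ⊆ Z
  right_satisfied : ∃ W ∈ Demand (fun S => (h S : WithBot ℝ)) q, B ⊆ W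

/-- An approximate competitive equilibrium: at prices `p` and `q`, which differ by at most `ε` on
`K`, the valuations `g` and `h` demand bundles `Z` and `W` that together partition `K`. -/
structure IsApproxEquilibrium (g h : Finset N → ℝ) (K : Finset N) (ε : ℝ) (p q : N → ℝ)
    (Z W : Finset N) : Prop where
  left_mem_demand : Z ∈ Demand (fun S => (g S : WithBot ℝ)) p
  right_mem_demand : W ∈ Demand (fun S => (h S : WithBot ℝ)) q
  mem_right_iff : ∀ i ∈ K, i ∈ W ↔ i ∉ Z
  abs_price_sub_le : ∀ i ∈ K, |p i - q i| ≤ ε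

namespace AuctionState

variable [DecidableEq N] {A B Z W : Finset N}

theorem symm (hs : AuctionState g h K ε p q A B) : AuctionState h g K ε q p B A :=
  ⟨union_comm B A ▸ hs.union_eq, hs.disjoint.symm, hs.price_left, hs.price_right,
    hs.right_satisfied, hs.left_satisfied⟩

theorem left_outbids (hh : GS fun S => (h S : WithBot ℝ)) (hε : 0 ≤ ε)
    (hs : AuctionState g h K ε p q A B) (hZ : Z ∈ Demand (fun S => (g S : WithBot ℝ)) p)
    (hAZ : A ⊆ Z) :
    AuctionState g h K ε p (fun i => q i + if i ∈ B ∩ Z then 2 * ε else 0) (A ∪ B ∩ Z)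
      (B \ Z) := by
  obtain ⟨W, hW, hBW⟩ := hs.right_satisfied
  obtain ⟨Y, hY, hkeep⟩ := hh q (fun i => q i + if i ∈ B ∩ Z then 2 * ε else 0)
    (fun i => by split_ifs <;> linarith) W hW
  have hdisj := disjoint_left.1 hs.disjoint
  have hA := hs.price_right
  have hB := hs.price_left
  refine ⟨?_, ?_, fun i hi => ?_, fun i hi => ?_, ⟨Z, hZ, by grind⟩,
    Y, hY, fun i hi => hkeep i (hBW (by grind)) (by grind)⟩
  · rw [← hs.union_eq]
    grind
  · exact disjoint_left.2 fun i => by grind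
  · grind
  · grind

theorem price_left_le {R : ℝ} (hg : ∀ S T, g S - g T ≤ R) (hs : AuctionState g h K ε p q A B)
    {i : N} (hi : i ∈ A) : p i ≤ R := by
  obtain ⟨Z, hZ, hAZ⟩ := hs.left_satisfied
  exact price_le_of_mem_demand hg hZ (hAZ hi)

theorem sum_price_le {R : ℝ} (hg : ∀ S T, g S - g T ≤ R) (hh : ∀ S T, h S - h T ≤ R)
    (hs : AuctionState g h K ε p q A B) : ∑ i ∈ K, (p i + q i) ≤ #K * (2 * R + ε) := by
  rw [← nsmul_eq_mul]
  refine sum_le_card_nsmul _ _ _ fun i hi => ?_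
  rcases mem_union.1 (hs.union_eq ▸ hi) with hA | hB
  · linarith [hs.price_left_le hg hA, hs.price_right i hA]
  · linarith [hs.symm.price_left_le hh hB, hs.price_left i hB]

theorem isApproxEquilibrium (hε : 0 ≤ ε) (hs : AuctionState g h K ε p q A B)
    (hZ : Z ∈ Demand (fun S => (g S : WithBot ℝ)) p) (hAZ : A ⊆ Z) (hBZ : Disjoint B Z)
    (hW : W ∈ Demand (fun S => (h S : WithBot ℝ)) q) (hBW : B ⊆ W) (hAW : Disjoint A W) :
    IsApproxEquilibrium g h K ε p q Z W where
  left_mem_demand := hZ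
  right_mem_demand := hW
  mem_right_iff i hi := by
    rw [← hs.union_eq] at hi
    rw [disjoint_left] at hBZ hAW
    grind
  abs_price_sub_le i hi := by
    rcases mem_union.1 (hs.union_eq ▸ hi) with hA | hB
    · rw [hs.price_right i hA, sub_add_cancel_left, abs_neg, abs_of_nonneg hε]
    · rw [hs.price_left i hB, add_sub_cancel_left, abs_of_nonneg hε]

theorem exists_raise_left (hh : GS fun S => (h S : WithBot ℝ)) (hε : 0 ≤ ε)
    (hs : AuctionState g h K ε p q A B) (hZ : Z ∈ Demand (fun S => (g S : WithBot ℝ)) p)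
    (hAZ : A ⊆ Z) (hBZ : ¬Disjoint B Z) :
    ∃ q' A' B', AuctionState g h K ε p q' A' B' ∧ (∀ i ∉ K, q' i = q i) ∧
      ∑ i ∈ K, q i + 2 * ε ≤ ∑ i ∈ K, q' i := by
  have hBK : B ⊆ K := hs.union_eq ▸ subset_union_right
  refine ⟨_, _, _, hs.left_outbids hh hε hZ hAZ, fun i hi => ?_, ?_⟩
  · grind
  · obtain ⟨j, hj⟩ := not_disjoint_iff_nonempty_inter.1 hBZ
    rw [sum_add_distrib]
    gcongr
    calc 2 * ε = if j ∈ B ∩ Z then 2 * ε else 0 := (if_pos hj).symm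
      _ ≤ ∑ i ∈ K, if i ∈ B ∩ Z then 2 * ε else 0 :=
        single_le_sum (f := fun i => if i ∈ B ∩ Z then 2 * ε else 0)
          (fun i _ => by positivity) (hBK (mem_inter.1 hj).1)

theorem exists_isApproxEquilibrium_or_raise (hg : GS fun S => (g S : WithBot ℝ))
    (hh : GS fun S => (h S : WithBot ℝ)) (hε : 0 ≤ ε) (hs : AuctionState g h K ε p q A B) :
    (∃ Z W, IsApproxEquilibrium g h K ε p q Z W) ∨
      ∃ p' q' A' B', AuctionState g h K ε p' q' A' B' ∧ (∀ i ∉ K, p' i = p i ∧ q' i = q i) ∧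
        ∑ i ∈ K, (p i + q i) + 2 * ε ≤ ∑ i ∈ K, (p' i + q' i) := by
  simp only [sum_add_distrib]
  obtain ⟨Z, hZ, hAZ⟩ := hs.left_satisfied
  obtain ⟨W, hW, hBW⟩ := hs.right_satisfied
  by_cases hBZ : Disjoint B Z
  · by_cases hAW : Disjoint A W
    · exact Or.inl ⟨Z, W, hs.isApproxEquilibrium hε hZ hAZ hBZ hW hBW hAW⟩
    · obtain ⟨p', B', A', hs', hoff, hsum⟩ := hs.symm.exists_raise_left hg hε hW hBW hAW
      exact Or.inr ⟨p', q, A', B', hs'.symm, fun i hi => ⟨hoff i hi, rfl⟩, by linarith⟩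
  · obtain ⟨q', A', B', hs', hoff, hsum⟩ := hs.exists_raise_left hh hε hZ hAZ hBZ
    exact Or.inr ⟨p, q', A', B', hs', fun i hi => ⟨rfl, hoff i hi⟩, by linarith⟩

theorem exists_isApproxEquilibrium {R : ℝ} (hg : GS fun S => (g S : WithBot ℝ))
    (hh : GS fun S => (h S : WithBot ℝ)) (hgR : ∀ S T, g S - g T ≤ R)
    (hhR : ∀ S T, h S - h T ≤ R) (hε : 0 < ε) (hs : AuctionState g h K ε p q A B) :
    ∃ p' q' Z W, IsApproxEquilibrium g h K ε p' q' Z W ∧ ∀ i ∉ K, p' i = p i ∧ q' i = q i := by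
  obtain ⟨n, hn⟩ : ∃ n : ℕ, #K * (2 * R + ε) < ∑ i ∈ K, (p i + q i) + n * (2 * ε) := by
    obtain ⟨n, hn⟩ := exists_nat_gt ((#K * (2 * R + ε) - ∑ i ∈ K, (p i + q i)) / (2 * ε))
    rw [div_lt_iff₀ (by positivity)] at hn
    exact ⟨n, by linarith⟩
  induction n generalizing p q A B with
  | zero =>
    have := hs.sum_price_le hgR hhR
    simp only [Nat.cast_zero, zero_mul, add_zero] at hn
    exact absurd hn this.not_gt
  | succ n ih =>
    rcases hs.exists_isApproxEquilibrium_or_raise hg hh hε.le with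
      ⟨Z, W, heq⟩ | ⟨p', q', A', B', hs', hoff, hsum⟩
    · exact ⟨p, q, Z, W, heq, fun i _ => ⟨rfl, rfl⟩⟩
    · push_cast at hn
      obtain ⟨p'', q'', Z, W, heq, hoff'⟩ := ih hs' (by linarith)
      exact ⟨p'', q'', Z, W, heq, fun i hi =>
        ⟨(hoff' i hi).1.trans (hoff i hi).1, (hoff' i hi).2.trans (hoff i hi).2⟩⟩

theorem of_low_price [Finite N] {R c : ℝ} (hgR : ∀ S T, g S - g T ≤ R) (hc : c < -R)
    (hp : ∀ i ∈ K, p i = c) (hq : ∀ i ∈ K, q i = c + ε) : AuctionState g h K ε p q K ∅ where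
  union_eq := union_empty K
  disjoint := disjoint_empty_right K
  price_right i hi := by rw [hp i hi, hq i hi]
  price_left i hi := absurd hi (notMem_empty i)
  left_satisfied := by
    obtain ⟨Z, hZ⟩ := demand_nonempty (fun S => (g S : WithBot ℝ)) p
    refine ⟨Z, hZ, fun i hi => ?_⟩
    by_contra hiZ
    linarith [neg_le_price_of_notMem_demand hgR hZ hiZ, hp i hi]
  right_satisfied :=
    let ⟨W, hW⟩ := demand_nonempty (fun S => (h S : WithBot ℝ)) q
    ⟨W, hW, empty_subset W⟩

end AuctionState

theorem GS.exists_isApproxEquilibrium [Finite N] (hg : GS fun S => (g S : WithBot ℝ))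
    (hh : GS fun S => (h S : WithBot ℝ)) (K : Finset N) (hε : 0 < ε) (a b : N → ℝ) :
    ∃ p q Z W, IsApproxEquilibrium g h K ε p q Z W ∧ ∀ i ∉ K, p i = a i ∧ q i = b i := by
  classical
  obtain ⟨Rg, hRg⟩ := exists_forall_sub_le g
  obtain ⟨Rh, hRh⟩ := exists_forall_sub_le h
  obtain ⟨c, hc⟩ := exists_lt (-Rg)
  have hs : AuctionState g h K ε (K.piecewise (fun _ => c) a) (K.piecewise (fun _ => c + ε) b)
      K ∅ :=
    .of_low_price hRg hc (fun i => piecewise_eq_of_mem _ _ _) fun i => piecewise_eq_of_mem _ _ _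
  simpa +contextual only [piecewise_eq_of_notMem, not_false_eq_true]
    using hs.exists_isApproxEquilibrium hg hh (fun S T => (hRg S T).trans (le_max_left Rg Rh))
      (fun S T => (hRh S T).trans (le_max_right Rg Rh)) hε

end Auction

section Exchange

variable {N : Type*} {g h : Finset N → ℝ} {ε : ℝ} {p q : N → ℝ}

theorem mem_iff_of_prohibitive_price {R M : ℝ} (hR : ∀ S T, g S - g T ≤ R) (hM : R < M)
    {Z : Finset N} (hZ : Z ∈ Demand (fun S => (g S : WithBot ℝ)) p) {i : N} {c : Prop}
    [Decidable c] (hp : p i = if c then -M else M) : i ∈ Z ↔ c := by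
  refine ⟨fun hiZ => ?_, fun hc => ?_⟩
  · by_contra hc
    linarith [price_le_of_mem_demand hR hZ hiZ, if_neg hc ▸ hp]
  · by_contra hiZ
    linarith [neg_le_price_of_notMem_demand hR hZ hiZ, if_pos hc ▸ hp]

variable [DecidableEq N]

theorem sum_inf_add_sum_sup_le {X Y I J : Finset N} (hI : I ⊆ X \ Y) (hJ : J ⊆ Y \ X)
    (hpq : ∀ i ∈ Y \ X, |p i - q i| ≤ ε) :
    ∑ i ∈ X, (p ⊓ q) i + ∑ i ∈ Y, (p ⊔ q) i ≤
      ∑ i ∈ (X \ I) ∪ J, p i + ∑ i ∈ (Y \ J) ∪ I, q i + #(Y \ X) * ε := by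
  have hsum {S : Finset N} (hS : S ⊆ X ∪ Y) (c : N → ℝ) :
      ∑ i ∈ S, c i = ∑ i ∈ X ∪ Y, if i ∈ S then c i else 0 := by
    rw [sum_ite_mem, inter_eq_right.2 hS]
  rw [← nsmul_eq_mul, ← sum_const, hsum (S := X) (by grind), hsum (S := Y) (by grind),
    hsum (S := _ ∪ J) (by grind), hsum (S := _ ∪ I) (by grind), hsum (S := Y \ X) (by grind)]
  simp only [← sum_add_distrib]
  refine sum_le_sum fun i _ => ?_
  have hpqi := hpq i
  simp only [abs_le, Pi.inf_apply, Pi.sup_apply] at hpqi ⊢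
  grind

variable [Finite N]

/-- Prohibitive prices off `K` force the first bidder to hold exactly `S` there, the second `T`. -/
theorem GS.exists_union_mem_demand (hg : GS fun S => (g S : WithBot ℝ))
    (hh : GS fun S => (h S : WithBot ℝ)) {K S T : Finset N} (hS : Disjoint S K)
    (hT : Disjoint T K) (hε : 0 < ε) :
    ∃ (p q : N → ℝ), ∃ J ⊆ K, (∀ i ∈ K, |p i - q i| ≤ ε) ∧
      S ∪ J ∈ Demand (fun S => (g S : WithBot ℝ)) p ∧
      T ∪ (K \ J) ∈ Demand (fun S => (h S : WithBot ℝ)) q := by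
  obtain ⟨Rg, hRg⟩ := exists_forall_sub_le g
  obtain ⟨Rh, hRh⟩ := exists_forall_sub_le h
  obtain ⟨Mg, hMg⟩ := exists_gt Rg
  obtain ⟨Mh, hMh⟩ := exists_gt Rh
  obtain ⟨p, q, Z, W, heq, hoff⟩ := hg.exists_isApproxEquilibrium hh K hε
    (fun i => if i ∈ S then -Mg else Mg) fun i => if i ∈ T then -Mh else Mh
  have hZ_off (i : N) (hi : i ∉ K) : i ∈ Z ↔ i ∈ S :=
    mem_iff_of_prohibitive_price hRg hMg heq.left_mem_demand (hoff i hi).1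
  have hW_off (i : N) (hi : i ∉ K) : i ∈ W ↔ i ∈ T :=
    mem_iff_of_prohibitive_price hRh hMh heq.right_mem_demand (hoff i hi).2
  have hZW := heq.mem_right_iff
  rw [disjoint_left] at hS hT
  have hZ : S ∪ (Z ∩ K) = Z := by
    ext i
    grind
  have hW : T ∪ (K \ (Z ∩ K)) = W := by
    ext i
    grind
  exact ⟨p, q, Z ∩ K, inter_subset_right, heq.abs_price_sub_le, hZ.symm ▸ heq.left_mem_demand,
    hW.symm ▸ heq.right_mem_demand⟩

theorem GS.exists_exchange_le_add (hg : GS fun S => (g S : WithBot ℝ)) {X Y I : Finset N}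
    (hI : I ⊆ X \ Y) (hε : 0 < ε) :
    ∃ J ⊆ Y \ X, g X + g Y ≤ g ((X \ I) ∪ J) + g ((Y \ J) ∪ I) + #(Y \ X) * ε := by
  obtain ⟨p, q, J, hJ, hpq, hA, hB⟩ := hg.exists_union_mem_demand hg (K := Y \ X) (S := X \ I)
    (T := (X ∩ Y) ∪ I) (disjoint_left.2 fun i => by grind) (disjoint_left.2 fun i => by grind) hε
  have hB_eq : (X ∩ Y) ∪ I ∪ ((Y \ X) \ J) = (Y \ J) ∪ I := by
    ext i
    grind
  rw [hB_eq] at hB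
  have hsubmod : surplus g (p ⊓ q) X + surplus g (p ⊔ q) Y ≤
      surplus g p ((X \ I) ∪ J) + surplus g q ((Y \ J) ∪ I) :=
    calc surplus g (p ⊓ q) X + surplus g (p ⊔ q) Y
        ≤ indirectUtility g (p ⊓ q) + indirectUtility g (p ⊔ q) :=
          add_le_add (surplus_le_indirectUtility _ _ _) (surplus_le_indirectUtility _ _ _)
      _ ≤ indirectUtility g p + indirectUtility g q := hg.indirectUtility_inf_add_sup_le p q
      _ = _ := by
          rw [mem_demand_coe_iff_indirectUtility_eq.1 hA,
            mem_demand_coe_iff_indirectUtility_eq.1 hB]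
  have hprices := sum_inf_add_sum_sup_le hI hJ hpq
  unfold surplus at hsubmod
  exact ⟨J, hJ, by linarith⟩

theorem GS.snc_coe (hg : GS fun S => (g S : WithBot ℝ)) : SNC fun S => (g S : WithBot ℝ) := by
  intro X Y I hI
  obtain ⟨J, hJ, hmax⟩ := exists_max_image (Y \ X).powerset
    (fun J => g ((X \ I) ∪ J) + g ((Y \ J) ∪ I)) (powerset_nonempty _)
  refine ⟨J, mem_powerset.1 hJ, ?_⟩
  beta_reduce
  norm_cast
  refine le_of_forall_pos_le_add fun η hη => ?_
  obtain ⟨ε, hε, hεη⟩ : ∃ ε > 0, #(Y \ X) * ε < η := exists_pos_mul_lt hη _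
  obtain ⟨J', hJ', hle⟩ := hg.exists_exchange_le_add hI hε
  linarith [hmax J' (mem_powerset.2 hJ')]

end Exchange

section Penalty

open scoped symmDiff

variable {N : Type*} [DecidableEq N] {f : Finset N → WithBot ℝ} {M : ℝ}
  {p : N → ℝ} {S Z : Finset N}

/-- The finite-valued extension of `f` off its effective domain: a bidder holding `S` may use any
bundle `Z` after buying or discarding the goods of `S ∆ Z` at cost `M` each. -/
noncomputable def penaltyExtension [Fintype N] (f : Finset N → WithBot ℝ) (M : ℝ) (S : Finset N) :
    WithBot ℝ :=
  univ.sup fun Z => f Z + ((-(M * #(S ∆ Z)) : ℝ) : WithBot ℝ)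

/-- The cost of acquiring `S` at prices `p` and then converting it into `Z` at cost `M` per good. -/
def tradeCost (M : ℝ) (p : N → ℝ) (S Z : Finset N) : ℝ :=
  M * #(S ∆ Z) + ∑ i ∈ S, p i

/-- The highest price at which holding a good is worthwhile for a bidder who uses `Z` and can buy
or discard goods at cost `M`. -/
def reservationPrice (M : ℝ) (Z : Finset N) (i : N) : ℝ :=
  if i ∈ Z then M else -M

/-- The largest bundle that minimizes `tradeCost M p · Z`. -/
noncomputable def bestHolding [Fintype N] (M : ℝ) (p : N → ℝ) (Z : Finset N) : Finset N :=
  {i | p i ≤ reservationPrice M Z i}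

/-- The prices `p` truncated to `[-M, M]`. -/
def clipPrice (M : ℝ) (p : N → ℝ) (i : N) : ℝ :=
  max (-M) (min (p i) M)

theorem tradeCost_eq (M : ℝ) (p : N → ℝ) (S Z : Finset N) :
    tradeCost M p S Z = M * #Z + ∑ i ∈ S, (p i - reservationPrice M Z i) := by
  have hres : ∑ i ∈ S, reservationPrice M Z i = M * #(S ∩ Z) - M * #(S \ Z) := by
    simp only [reservationPrice, sum_ite, filter_mem_eq_inter, filter_notMem_eq_sdiff, sum_const,
      nsmul_eq_mul]
    ring
  have hsymm : #(S ∆ Z) = #(S \ Z) + #(Z \ S) := card_union_of_disjoint disjoint_sdiff_sdiff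
  have hZ : #Z = #(Z ∩ S) + #(Z \ S) := (card_inter_add_card_sdiff Z S).symm
  rw [tradeCost, sum_sub_distrib, hres, hsymm, hZ, inter_comm Z S]
  push_cast
  ring

theorem eq_of_mul_card_symmDiff_lt (hM : 0 ≤ M) (h : M * #(S ∆ Z) < M) : S = Z := by
  by_contra hne
  have hcard : (1 : ℝ) ≤ #(S ∆ Z) := by
    exact_mod_cast card_pos.2 (symmDiff_nonempty.2 hne)
  exact h.not_ge (le_mul_of_one_le_right hM hcard)

variable [Fintype N]

theorem mem_bestHolding {i : N} : i ∈ bestHolding M p Z ↔ p i ≤ reservationPrice M Z i :=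
  mem_filter_univ i

theorem tradeCost_bestHolding_eq_sum_min (M : ℝ) (p : N → ℝ) (Z : Finset N) :
    tradeCost M p (bestHolding M p Z) Z =
      M * #Z + ∑ i, min (p i - reservationPrice M Z i) 0 := by
  rw [tradeCost_eq, bestHolding, sum_filter]
  congr! 2 with i
  grind

theorem tradeCost_bestHolding_le (M : ℝ) (p : N → ℝ) (S Z : Finset N) :
    tradeCost M p (bestHolding M p Z) Z ≤ tradeCost M p S Z := by
  rw [tradeCost_bestHolding_eq_sum_min, tradeCost_eq, ← univ_inter S, ← sum_ite_mem]
  gcongr with i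
  split_ifs
  · exact min_le_left _ _
  · exact min_le_right _ _

theorem subset_bestHolding (h : tradeCost M p S Z ≤ tradeCost M p (bestHolding M p Z) Z) :
    S ⊆ bestHolding M p Z := by
  intro i hi
  by_contra hcon
  rw [mem_bestHolding, not_le] at hcon
  have herase := h.trans (tradeCost_bestHolding_le M p (S.erase i) Z)
  rw [tradeCost_eq, tradeCost_eq, ← add_sum_erase S _ hi] at herase
  linarith

theorem tradeCost_bestHolding (hM : 0 ≤ M) (p : N → ℝ) (Z : Finset N) :
    tradeCost M p (bestHolding M p Z) Z =
      ∑ i ∈ Z, clipPrice M p i - ∑ i, max (-M - p i) 0 := by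
  rw [tradeCost_bestHolding_eq_sum_min, mul_comm, ← nsmul_eq_mul, ← sum_const, ← univ_inter Z,
    ← sum_ite_mem, ← sum_ite_mem, ← sum_add_distrib, ← sum_sub_distrib]
  refine sum_congr rfl fun i _ => ?_
  unfold reservationPrice clipPrice
  grind

theorem le_penaltyExtension {z : ℝ} (hz : f Z = z) (M : ℝ) (S : Finset N) :
    ((z - M * #(S ∆ Z) : ℝ) : WithBot ℝ) ≤ penaltyExtension f M S := by
  have h := le_sup (f := fun Z => f Z + ((-(M * #(S ∆ Z)) : ℝ) : WithBot ℝ)) (mem_univ Z)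
  rwa [hz, ← WithBot.coe_add, ← sub_eq_add_neg] at h

theorem penaltyExtension_ne_bot (hdom : ∃ X, f X ≠ ⊥) (M : ℝ) (S : Finset N) :
    penaltyExtension f M S ≠ ⊥ := by
  obtain ⟨X, hX⟩ := hdom
  obtain ⟨x, hx⟩ := WithBot.ne_bot_iff_exists.1 hX
  exact ne_bot_of_le_ne_bot WithBot.coe_ne_bot (le_penaltyExtension hx.symm M S)

theorem exists_penaltyExtension_eq (hdom : ∃ X, f X ≠ ⊥) (M : ℝ) (S : Finset N) :
    ∃ (Z : Finset N) (z : ℝ), f Z = z ∧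
      penaltyExtension f M S = ((z - M * #(S ∆ Z) : ℝ) : WithBot ℝ) := by
  obtain ⟨Z, -, hZ⟩ := exists_mem_eq_sup univ univ_nonempty
    fun Z => f Z + ((-(M * #(S ∆ Z)) : ℝ) : WithBot ℝ)
  have hfZ : f Z ≠ ⊥ := fun hbot =>
    penaltyExtension_ne_bot hdom M S (hZ.trans (by rw [hbot, WithBot.bot_add]))
  obtain ⟨z, hz⟩ := WithBot.ne_bot_iff_exists.1 hfZ
  exact ⟨Z, z, hz.symm, hZ.trans (by rw [← hz, ← WithBot.coe_add, ← sub_eq_add_neg])⟩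

theorem mem_demand_penaltyExtension_iff (hdom : ∃ X, f X ≠ ⊥) :
    S ∈ Demand (penaltyExtension f M) p ↔ ∃ (Z : Finset N) (z : ℝ), f Z = z ∧
      ∀ (T W : Finset N) (w : ℝ), f W = w →
        w - tradeCost M p T W ≤ z - tradeCost M p S Z := by
  unfold tradeCost
  rw [mem_demand_iff ⟨S, penaltyExtension_ne_bot hdom M S⟩]
  constructor
  · rintro ⟨s, hs, hmax⟩
    obtain ⟨Z, z, hz, hsz⟩ := exists_penaltyExtension_eq hdom M S
    refine ⟨Z, z, hz, fun T W w hw => ?_⟩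
    obtain ⟨t, ht⟩ := WithBot.ne_bot_iff_exists.1 (penaltyExtension_ne_bot hdom M T)
    have hwt := le_penaltyExtension hw M T
    rw [← ht, WithBot.coe_le_coe] at hwt
    rw [hs, WithBot.coe_inj] at hsz
    linarith [hmax T t ht.symm]
  · rintro ⟨Z, z, hz, hmax⟩
    obtain ⟨s, hs⟩ := WithBot.ne_bot_iff_exists.1 (penaltyExtension_ne_bot hdom M S)
    refine ⟨s, hs.symm, fun T t ht => ?_⟩
    obtain ⟨W, w, hw, htw⟩ := exists_penaltyExtension_eq hdom M T
    have hzs := le_penaltyExtension hz M S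
    rw [← hs, WithBot.coe_le_coe] at hzs
    rw [ht, WithBot.coe_inj] at htw
    linarith [hmax T W w hw]

theorem exists_mem_demand_clipPrice (hM : 0 ≤ M) (hdom : ∃ X, f X ≠ ⊥)
    (hS : S ∈ Demand (penaltyExtension f M) p) :
    ∃ Z ∈ Demand f (clipPrice M p), S ⊆ bestHolding M p Z := by
  obtain ⟨Z, z, hz, hmax⟩ := (mem_demand_penaltyExtension_iff hdom).1 hS
  refine ⟨Z, (mem_demand_iff hdom).2 ⟨z, hz, fun W w hw => ?_⟩,
    subset_bestHolding (by linarith [hmax (bestHolding M p Z) Z z hz])⟩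
  linarith [hmax (bestHolding M p W) W w hw, tradeCost_bestHolding_le M p S Z,
    tradeCost_bestHolding hM p Z, tradeCost_bestHolding hM p W]

theorem bestHolding_mem_demand (hM : 0 ≤ M) (hdom : ∃ X, f X ≠ ⊥)
    (hZ : Z ∈ Demand f (clipPrice M p)) :
    bestHolding M p Z ∈ Demand (penaltyExtension f M) p := by
  obtain ⟨z, hz, hmax⟩ := (mem_demand_iff hdom).1 hZ
  refine (mem_demand_penaltyExtension_iff hdom).2 ⟨Z, z, hz, fun T W w hw => ?_⟩
  linarith [hmax W w hw, tradeCost_bestHolding_le M p T W, tradeCost_bestHolding hM p Z,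
    tradeCost_bestHolding hM p W]

theorem GS.gs_penaltyExtension (hM : 0 ≤ M) (hdom : ∃ X, f X ≠ ⊥) (hf : GS f) :
    GS (penaltyExtension f M) := by
  intro p q hpq S hS
  obtain ⟨Z, hZ, hSZ⟩ := exists_mem_demand_clipPrice hM hdom hS
  obtain ⟨Y, hY, hkeep⟩ := hf (clipPrice M p) (clipPrice M q)
    (fun i => max_le_max_left _ (min_le_min_right _ (hpq i))) Z hZ
  refine ⟨bestHolding M q Y, bestHolding_mem_demand hM hdom hY, fun i hi hpi => ?_⟩
  have hiY : i ∈ Z → i ∈ Y := fun h => hkeep i h (by simp only [clipPrice, hpi])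
  have hpZ : p i ≤ reservationPrice M Z i := mem_bestHolding.1 (hSZ hi)
  rw [mem_bestHolding, ← hpi]
  unfold reservationPrice at hpZ ⊢
  grind

theorem SNC.of_penaltyExtension {R : ℝ}
    (hR : ∀ (S T : Finset N) (s t : ℝ), f S = s → f T = t → s - t ≤ R) (hRM : 2 * R < M)
    (h : SNC (penaltyExtension f M)) : SNC f := by
  intro X Y I hI
  cases hX : f X with
  | bot => exact ⟨∅, empty_subset _, by rw [WithBot.bot_add]; exact bot_le⟩
  | coe x =>
  cases hY : f Y with
  | bot => exact ⟨∅, empty_subset _, by rw [WithBot.add_bot]; exact bot_le⟩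
  | coe y =>
  have hM : 0 ≤ M := by linarith [hR X X x x hX hX]
  have hdom : ∃ X, f X ≠ ⊥ := ⟨X, hX ▸ WithBot.coe_ne_bot⟩
  obtain ⟨J, hJ, hle⟩ := h X Y I hI
  obtain ⟨A, a, ha, hA⟩ := exists_penaltyExtension_eq hdom M ((X \ I) ∪ J)
  obtain ⟨B, b, hb, hB⟩ := exists_penaltyExtension_eq hdom M ((Y \ J) ∪ I)
  have hxy : x + y ≤
      a - M * #(((X \ I) ∪ J) ∆ A) + (b - M * #(((Y \ J) ∪ I) ∆ B)) := by
    have := (add_le_add (le_penaltyExtension hX M X) (le_penaltyExtension hY M Y)).trans hle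
    rw [hA, hB] at this
    simpa [-WithBot.coe_add, ← WithBot.coe_add] using this
  have hA_pen : 0 ≤ M * #(((X \ I) ∪ J) ∆ A) := by positivity
  have hB_pen : 0 ≤ M * #(((Y \ J) ∪ I) ∆ B) := by positivity
  have hA_eq : (X \ I) ∪ J = A :=
    eq_of_mul_card_symmDiff_lt hM (by linarith [hR A X a x ha hX, hR B Y b y hb hY])
  have hB_eq : (Y \ J) ∪ I = B :=
    eq_of_mul_card_symmDiff_lt hM (by linarith [hR A X a x ha hX, hR B Y b y hb hY])
  refine ⟨J, hJ, ?_⟩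
  rw [hA_eq, hB_eq, ha, hb]
  exact_mod_cast (by linarith : x + y ≤ a + b)

end Penalty

theorem GS.snc {N : Type*} [Finite N] [DecidableEq N] {f : Finset N → WithBot ℝ}
    (hdom : ∃ X, f X ≠ ⊥) (hf : GS f) : SNC f := by
  have := Fintype.ofFinite N
  obtain ⟨R, hR⟩ := exists_forall_sub_le fun S => (f S).unbotD 0
  have hR_nonneg : 0 ≤ R := by simpa only [sub_self] using hR ∅ ∅
  have hfR (S T : Finset N) (s t : ℝ) (hs : f S = s) (ht : f T = t) : s - t ≤ R := by
    simpa only [hs, ht, WithBot.unbotD_coe] using hR S T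
  obtain ⟨M, hRM⟩ := exists_gt (2 * R)
  have hM : 0 ≤ M := by linarith
  have hpen := hf.gs_penaltyExtension hM hdom
  refine SNC.of_penaltyExtension hfR hRM ?_
  lift penaltyExtension f M to Finset N → ℝ using penaltyExtension_ne_bot hdom M with g
  exact hpen.snc_coe

theorem snc_iff_gs {N : Type*} [Fintype N] [DecidableEq N]
    (f : Finset N → WithBot ℝ) (hdom : ∃ X, f X ≠ ⊥) :
    SNC f ↔ GS f :=
  ⟨SNC.gs hdom, GS.snc hdom⟩
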